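/- Let G be an ample groupoid, M a nondegenerate Z[G]-module with associated G-sheaf M (stalks M_x = colim_{x ∈ U} χ_U M), and Y an étale G-space. The map Ξ : Hom_G(Γ_c(Z[Y]^s), Γ_c(M)) → Hom_G(Z[Y]^s, M), Ξ(φ)([y]) = φ(⟨y⟩_V^s)(p(y)) (for any compact open neighborhood V of y on which p is injective) is a well-defined isomorphism, independent of the choice of V, with inverse Ξ^{-1}(f)(ξ)(x) = f(ξ(x)). In particular Hom_G(Z[Y], M) ≅ Hom_G(Z[Y]^s, M), naturally in Y. -/

import Mathlib

open scoped CompactlySupported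

/-- A topological groupoid with unit space `X` and arrow space `G`.  Composability of a pair
`(g, h)` means `s g = r h`, and multiplication is only defined on composable pairs. -/
structure TopGroupoid (X G : Type*) [TopologicalSpace X] [TopologicalSpace G] where
  s : G → X
  r : G → X
  continuous_s : Continuous s
  continuous_r : Continuous r
  unit : X → G
  continuous_unit : Continuous unit
  embedding_unit : Topology.IsEmbedding unit
  mul : (g h : G) → s g = r h → G
  continuous_mul : Continuous fun p : {p : G × G // s p.1 = r p.2} => mul p.1.1 p.1.2 p.2
  inv : G → G
  continuous_inv : Continuous inv
  s_unit : ∀ x, s (unit x) = x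
  r_unit : ∀ x, r (unit x) = x
  s_mul : ∀ g h hc, s (mul g h hc) = s h
  r_mul : ∀ g h hc, r (mul g h hc) = r g
  unit_mul : ∀ g (hc : s (unit (r g)) = r g), mul (unit (r g)) g hc = g
  mul_unit : ∀ g (hc : s g = r (unit (s g))), mul g (unit (s g)) hc = g
  s_inv : ∀ g, s (inv g) = r g
  r_inv : ∀ g, r (inv g) = s g
  inv_mul : ∀ g (hc : s (inv g) = r g), mul (inv g) g hc = unit (s g)
  mul_inv : ∀ g (hc : s g = r (inv g)), mul g (inv g) hc = unit (r g)
  mul_assoc : ∀ g h k (hgh : s g = r h) (hhk : s h = r k),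
    mul (mul g h hgh) k ((s_mul g h hgh).trans hhk) =
      mul g (mul h k hhk) (hgh.trans (r_mul h k hhk).symm)

namespace TopGroupoid

variable {X G : Type*} [TopologicalSpace X] [TopologicalSpace G]

/-- An étale groupoid: the source and range maps are local homeomorphisms. -/
def IsEtale (Gr : TopGroupoid X G) : Prop :=
  IsLocalHomeomorph Gr.s ∧ IsLocalHomeomorph Gr.r

/-- An ample groupoid: an étale groupoid whose (Hausdorff, locally compact) unit space is
totally disconnected. -/
def IsAmple (Gr : TopGroupoid X G) : Prop :=
  Gr.IsEtale ∧ TotallyDisconnectedSpace X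

/-- The space `G^(n)` of composable strings of `n` arrows, for `n ≥ 1`, topologized as a
subspace of the product `G^n`. -/
def Str (Gr : TopGroupoid X G) (n : ℕ) : Type _ :=
  {g : Fin n → G // ∀ (i : ℕ) (h : i + 1 < n),
    Gr.s (g ⟨i, Nat.lt_of_succ_lt h⟩) = Gr.r (g ⟨i + 1, h⟩)}

instance (Gr : TopGroupoid X G) (n : ℕ) : TopologicalSpace (Gr.Str n) :=
  inferInstanceAs (TopologicalSpace {g : Fin n → G // ∀ (i : ℕ) (h : i + 1 < n),
    Gr.s (g ⟨i, Nat.lt_of_succ_lt h⟩) = Gr.r (g ⟨i + 1, h⟩)})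

/-- `FaceSpec Gr n i F` asserts that `F : G^(n) → G^(n-1)` is the `i`-th face map
`∂_i^n` of the bar construction (`0 ≤ i ≤ n`, `2 ≤ n`): `∂_0` deletes the first arrow, `∂_n`
deletes the last arrow, and `∂_i` for `1 ≤ i ≤ n-1` multiplies the `i`-th and `(i+1)`-st
arrows (in one-based labelling `(g_1, …, g_n)`). -/
def FaceSpec (Gr : TopGroupoid X G) (n i : ℕ) (F : Gr.Str n → Gr.Str (n - 1)) : Prop :=
  ∀ (g : Gr.Str n) (j : Fin (n - 1)),
    (i = 0 → (F g).1 j = g.1 ⟨j.1 + 1, by omega⟩) ∧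
    (1 ≤ i → i ≤ n - 1 →
      ((j.1 + 1 < i → (F g).1 j = g.1 ⟨j.1, by omega⟩) ∧
       (j.1 + 1 = i → (F g).1 j =
          Gr.mul (g.1 ⟨j.1, by omega⟩) (g.1 ⟨j.1 + 1, by omega⟩) (g.2 j.1 (by omega))) ∧
       (i < j.1 + 1 → (F g).1 j = g.1 ⟨j.1 + 1, by omega⟩))) ∧
    (i = n → (F g).1 j = g.1 ⟨j.1, by omega⟩)

end TopGroupoid

namespace TopGroupoid

variable {X G : Type*} [TopologicalSpace X] [TopologicalSpace G]

/-- A (left) action of the topological groupoid `Gr` on a space `Y`, with anchor map `p`. -/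
structure GSpace (Gr : TopGroupoid X G) (Y : Type*) [TopologicalSpace Y] where
  p : Y → X
  continuous_p : Continuous p
  surjective_p : Function.Surjective p
  act : (g : G) → (y : Y) → Gr.s g = p y → Y
  continuous_act :
    Continuous fun q : {q : G × Y // Gr.s q.1 = p q.2} => act q.1.1 q.1.2 q.2
  p_act : ∀ g y h, p (act g y h) = Gr.r g
  act_act : ∀ g₁ g₂ y (h₂ : Gr.s g₂ = p y) (h₁ : Gr.s g₁ = Gr.r g₂),
    act g₁ (act g₂ y h₂) (h₁.trans (p_act g₂ y h₂).symm) =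
      act (Gr.mul g₁ g₂ h₁) y ((Gr.s_mul g₁ g₂ h₁).trans h₂)
  unit_act : ∀ y (h : Gr.s (Gr.unit (p y)) = p y), act (Gr.unit (p y)) y h = y

/-- An étale `G`-space (a `G`-sheaf of sets): the anchor map is a local homeomorphism. -/
def GSpace.IsEtaleSpace {Gr : TopGroupoid X G} {Y : Type*} [TopologicalSpace Y]
    (Sp : Gr.GSpace Y) : Prop :=
  IsLocalHomeomorph Sp.p

/-- `ConvSpec Gr mul` asserts that `mul` is the convolution product on `ℤ[G] = C_c(G, ℤ)`. -/
def ConvSpec (Gr : TopGroupoid X G) (mul : C_c(G, ℤ) → C_c(G, ℤ) → C_c(G, ℤ)) : Prop :=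
  ∀ (f₁ f₂ : C_c(G, ℤ)) (g : G),
    mul f₁ f₂ g = ∑ᶠ h : {h : G // Gr.s h = Gr.r g}, f₁ (Gr.inv h.1) * f₂ (Gr.mul h.1 g h.2)

/-- `SmulSpec Sp smul` asserts that `smul` is the canonical `ℤ[G]`-action on `ℤ[Y] = C_c(Y, ℤ)`
for an étale `G`-space `Y`:  `(f · m)(x) = Σ_{g ∈ G_{p(x)}} f(g⁻¹) m(g · x)`. -/
def GSpace.SmulSpec {Gr : TopGroupoid X G} {Y : Type*} [TopologicalSpace Y]
    (Sp : Gr.GSpace Y) (smul : C_c(G, ℤ) → C_c(Y, ℤ) → C_c(Y, ℤ)) : Prop :=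
  ∀ (f : C_c(G, ℤ)) (m : C_c(Y, ℤ)) (x : Y),
    smul f m x =
      ∑ᶠ g : {g : G // Gr.s g = Sp.p x}, f (Gr.inv g.1) * m (Sp.act g.1 x g.2)

end TopGroupoid

namespace TopGroupoid

open scoped Classical

variable {X G : Type*} [TopologicalSpace X] [TopologicalSpace G]

/-- A compactly supported continuous section of the `G`-sheaf `ℤ[Y]^s` associated to an étale
`G`-space `p : Y → G^(0)`:  the stalk at `x` is the free abelian group `ℤ[Y_x]` on the fiber
`Y_x = p⁻¹(x)` (realized inside `Y →₀ ℤ`), and continuity for the germ topology means that the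
section is locally a finite `ℤ`-linear combination of the basic sections determined by compact
open slices of `Y`. -/
def FreeSection {Y : Type*} [TopologicalSpace Y] {Gr : TopGroupoid X G}
    (Sp : Gr.GSpace Y) (ξ : X → (Y →₀ ℤ)) : Prop :=
  (∀ x, ∀ y ∈ (ξ x).support, Sp.p y = x) ∧
  (∀ x : X, ∃ U : Set X, IsOpen U ∧ x ∈ U ∧
    ∃ (k : ℕ) (V : Fin k → Set Y) (a : Fin k → ℤ) (σ : Fin k → X → Y),
      (∀ i, IsCompact (V i) ∧ IsOpen (V i) ∧ Set.InjOn Sp.p (V i) ∧ U ⊆ Sp.p '' V i) ∧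
      (∀ i, ∀ x' ∈ U, σ i x' ∈ V i ∧ Sp.p (σ i x') = x') ∧
      (∀ x' ∈ U, ξ x' = ∑ i, a i • Finsupp.single (σ i x') 1)) ∧
  (∃ K : Set X, IsCompact K ∧ ∀ x ∉ K, ξ x = 0)

end TopGroupoid

namespace TopGroupoid

variable {X G : Type*} [TopologicalSpace X] [TopologicalSpace G]

/-- A `G`-sheaf (of abelian groups) over the unit space of a topological groupoid `Gr`:
an étale space over `X` with fibers `E x` that are abelian groups with continuous operations,
together with a continuous action of `Gr` by isomorphisms between the stalks. -/
structure GSheaf (Gr : TopGroupoid X G) (E : X → Type*) [∀ x, AddCommGroup (E x)]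
    [TopologicalSpace ((x : X) × E x)] where
  isLocalHomeomorph_fst : IsLocalHomeomorph (fun q : (x : X) × E x => q.1)
  continuous_zero : Continuous fun x : X => (⟨x, 0⟩ : (x : X) × E x)
  continuous_add : ∀ ξ η : ∀ x, E x,
    Continuous (fun x => (⟨x, ξ x⟩ : (x : X) × E x)) →
    Continuous (fun x => (⟨x, η x⟩ : (x : X) × E x)) →
    Continuous (fun x => (⟨x, ξ x + η x⟩ : (x : X) × E x))
  continuous_neg : ∀ ξ : ∀ x, E x,
    Continuous (fun x => (⟨x, ξ x⟩ : (x : X) × E x)) →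
    Continuous (fun x => (⟨x, -ξ x⟩ : (x : X) × E x))
  act : (g : G) → E (Gr.s g) →+ E (Gr.r g)
  continuous_act : Continuous fun q : {q : G × ((x : X) × E x) // q.2.1 = Gr.s q.1} =>
    (⟨Gr.r q.1.1, act q.1.1 (q.2 ▸ q.1.2.2)⟩ : (x : X) × E x)
  act_unit : ∀ (x : X) (v : E (Gr.s (Gr.unit x))),
    act (Gr.unit x) v = ((Gr.s_unit x).trans (Gr.r_unit x).symm) ▸ v
  act_mul : ∀ (g h : G) (hc : Gr.s g = Gr.r h) (v : E (Gr.s h)),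
    (Gr.r_mul g h hc) ▸ act (Gr.mul g h hc) ((Gr.s_mul g h hc).symm ▸ v) =
      act g (hc.symm ▸ act h v)

variable {E : X → Type*} [∀ x, AddCommGroup (E x)] [TopologicalSpace ((x : X) × E x)]
variable {Gr : TopGroupoid X G}

/-- The compactly supported continuous sections of a `G`-sheaf. -/
def GSheaf.GammaC (_Sh : Gr.GSheaf E) : Type _ :=
  {ξ : ∀ x, E x // Continuous (fun x => (⟨x, ξ x⟩ : (x : X) × E x)) ∧
    ∃ K : Set X, IsCompact K ∧ ∀ x ∉ K, ξ x = 0}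

/-- `GammaSmulSpec Sh smul` asserts that `smul` is the canonical `ℤ[G]`-module structure on
the compactly supported sections of the `G`-sheaf `Sh`:
`(f ξ)(x) = Σ_{r(g) = x} f(g) (g · ξ(s(g)))`. -/
def GammaSmulSpec (Sh : Gr.GSheaf E)
    (smul : C_c(G, ℤ) → Sh.GammaC → Sh.GammaC) : Prop :=
  ∀ (f : C_c(G, ℤ)) (ξ : Sh.GammaC) (x : X),
    (smul f ξ).1 x =
      ∑ᶠ g : {g : G // Gr.r g = x}, f g.1 • (g.2 ▸ Sh.act g.1 (ξ.1 (Gr.s g.1)))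

end TopGroupoid

namespace TopGroupoid

variable {X G : Type*} [TopologicalSpace X] [TopologicalSpace G]

/-- `FreeSectionSmulSpec Sp smulF` asserts that `smulF` is the canonical `ℤ[G]`-module
structure on the compactly supported sections of the `G`-sheaf `ℤ[Y]^s`. -/
def FreeSectionSmulSpec {Y : Type*} [TopologicalSpace Y] {Gr : TopGroupoid X G}
    (Sp : Gr.GSpace Y)
    (smulF : C_c(G, ℤ) → {ξ : X → (Y →₀ ℤ) // FreeSection Sp ξ} →
      {ξ : X → (Y →₀ ℤ) // FreeSection Sp ξ}) : Prop :=
  ∀ (f : C_c(G, ℤ)) (ξ : {ξ : X → (Y →₀ ℤ) // FreeSection Sp ξ}) (x : X),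
    (∀ (y : Y) (hy : Sp.p y = x),
      (smulF f ξ).1 x y =
        ∑ᶠ g : {g : G // Gr.r g = x},
          f g.1 * ξ.1 (Gr.s g.1)
            (Sp.act (Gr.inv g.1) y ((Gr.s_inv g.1).trans (g.2.trans hy.symm)))) ∧
    (∀ y : Y, Sp.p y ≠ x → (smulF f ξ).1 x y = 0)

end TopGroupoid

open TopGroupoid
open scoped Classical

/-!
Near each point of `X`, a section of `ℤ[Y]^s` is a `ℤ`-linear combination of basic sections `⟨·⟩_V`.
Multiplication by `χ_U`, for a small compact open set `U` of units, shows that a module morphism `T`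
is local: `(T ξ)(x)` depends only on the germ of `ξ` at `x`.  Hence `F([y]) = T(⟨y⟩_V)(p(y))` is
independent of `V`, and `(T ξ)(x) = F(ξ(x))` because both sides are additive and agree on basic
sections.  Acting by `χ_B`, for a compact open slice `B` around an arrow `g`, turns the
`ℤ[G]`-linearity of `T` into the equivariance of `F` under `g`.  Conversely, both module
structures are given by the same convolution formula `(f ξ)(x) = ∑_{r(g) = x} f(g) (g · ξ(s(g)))`,
which commutes with any equivariant family of homomorphisms between the stalks.
-/

namespace TopGroupoid

open Topology Filter TopologicalSpace

section LocalHomeomorphisms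

variable {X Z : Type*} [TopologicalSpace X] [TopologicalSpace Z]

theorem exists_compactOpens_subset [T2Space X] [LocallyCompactSpace X]
    [TotallyDisconnectedSpace X] {x : X} {U : Set X} (hU : U ∈ 𝓝 x) :
    ∃ W : CompactOpens X, x ∈ W ∧ (W : Set X) ⊆ U := by
  obtain ⟨K, hK, hKU, hKc⟩ := local_compact_nhds hU
  obtain ⟨W, hW, hxW, hWK⟩ := loc_compact_Haus_tot_disc_of_zero_dim.mem_nhds_iff.1 hK
  exact ⟨⟨⟨W, hKc.of_isClosed_subset hW.1 hWK⟩, hW.2⟩, hxW, hWK.trans hKU⟩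

theorem exists_compactOpens_injOn [T2Space X] [LocallyCompactSpace X]
    [TotallyDisconnectedSpace X] {f : Z → X} (hf : IsLocalHomeomorph f) (z : Z) :
    ∃ V : CompactOpens Z, z ∈ V ∧ Set.InjOn f V := by
  obtain ⟨e, hz, rfl⟩ := hf z
  obtain ⟨W, hzW, hWe⟩ := exists_compactOpens_subset (e.open_target.mem_nhds (e.map_source hz))
  refine ⟨⟨⟨e.symm '' W, W.isCompact.image_of_continuousOn (e.continuousOn_symm.mono hWe)⟩,
    e.symm.isOpen_image_of_subset_source W.isOpen hWe⟩, ⟨e z, hzW, e.left_inv hz⟩,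
    e.injOn.mono ?_⟩
  rintro _ ⟨w, hw, rfl⟩
  exact e.map_target (hWe hw)

theorem hasFiniteSupport_comp_fiber_val [T1Space X] {R : Type*} [TopologicalSpace R] [Zero R]
    {f : Z → X} (hf : IsLocalHomeomorph f) (a : C_c(Z, R)) (x : X) :
    Function.HasFiniteSupport fun z : {z : Z // f z = x} => a z.1 := by
  have hdiscrete : IsDiscrete (tsupport a ∩ f ⁻¹' {x}) :=
    hf.isLocalHomeomorphOn.mono (Set.subset_univ _) |>.isDiscrete_of_image <|
      (Set.subsingleton_singleton.anti <| Set.image_subset_iff.2 Set.inter_subset_right).isDiscrete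
  have hfinite : (tsupport a ∩ f ⁻¹' {x}).Finite :=
    (a.hasCompactSupport.isCompact.inter_right
      (isClosed_singleton.preimage hf.continuous)).finite hdiscrete
  exact (hfinite.preimage Subtype.val_injective.injOn).subset
    fun z hz => ⟨subset_tsupport _ hz, z.2⟩

/-- The indicator function `χ_K` of a compact open set, as an element of `C_c(Z, ℤ)`. -/
noncomputable def compactOpenIndicator [T2Space Z] (K : CompactOpens Z) : C_c(Z, ℤ) where
  toFun := (K : Set Z).indicator 1
  continuous_toFun := IsClopen.continuous_indicator ⟨K.isCompact.isClosed, K.isOpen⟩ continuous_one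
  hasCompactSupport' := HasCompactSupport.intro K.isCompact fun _ h => Set.indicator_of_notMem h _

end LocalHomeomorphisms

section FiberwiseFree

variable {X Y : Type*}

/-- The section `⟨·⟩_V : x ↦ [z]`, where `z` is the point of `V` over `x`, and `0` if there is
none.  The sum has at most one term when `p` is injective on `V`. -/
noncomputable def sliceFun (p : Y → X) (V : Set Y) (x : X) : Y →₀ ℤ :=
  ∑ᶠ y ∈ V ∩ p ⁻¹' {x}, Finsupp.single y 1

theorem sliceFun_apply_of_mem {p : Y → X} {V : Set Y} (hV : Set.InjOn p V) {y : Y} (hy : y ∈ V) :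
    sliceFun p V (p y) = Finsupp.single y 1 := by
  have hfiber : V ∩ p ⁻¹' {p y} = {y} :=
    Set.eq_singleton_iff_unique_mem.2 ⟨⟨hy, rfl⟩, fun z hz => hV hz.1 hy hz.2⟩
  rw [sliceFun, hfiber, finsum_mem_singleton]

theorem sliceFun_apply_of_notMem {p : Y → X} {V : Set Y} {x : X} (hx : x ∉ p '' V) :
    sliceFun p V x = 0 := by
  have hfiber : V ∩ p ⁻¹' {x} = ∅ :=
    Set.eq_empty_of_forall_notMem fun y hy => hx ⟨y, hy⟩
  rw [sliceFun, hfiber, finsum_mem_empty]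

theorem sliceFun_apply_apply {p : Y → X} {V : Set Y} (hV : Set.InjOn p V) (x : X) (y : Y) :
    sliceFun p V x y = if y ∈ V ∧ p y = x then 1 else 0 := by
  by_cases hx : x ∈ p '' V
  · obtain ⟨z, hz, rfl⟩ := hx
    rw [sliceFun_apply_of_mem hV hz, Finsupp.single_apply]
    refine if_congr ⟨?_, fun h => hV hz h.1 h.2.symm⟩ rfl rfl
    rintro rfl
    exact ⟨hz, rfl⟩
  · rw [sliceFun_apply_of_notMem hx, if_neg fun h => hx ⟨y, h⟩, Finsupp.zero_apply]

variable {E : X → Type*} [∀ x, AddCommGroup (E x)] {p : Y → X}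

/-- The additive extension `ℤ[Y_x] → E x` of a family `F y ∈ E (p y)` to the stalk over `x`.  Since
`ℤ[Y_x]` is realized inside `ℤ[Y]`, points outside of the fiber are sent to `0`. -/
noncomputable def fiberLift (F : ∀ y, E (p y)) (x : X) : (Y →₀ ℤ) →+ E x :=
  Finsupp.liftAddHom fun y => if h : p y = x then zmultiplesHom (E x) (h ▸ F y) else 0

theorem fiberLift_single (F : ∀ y, E (p y)) {x : X} {y : Y} (n : ℤ) (h : p y = x) :
    fiberLift F x (Finsupp.single y n) = n • (h ▸ F y : E x) := by
  simp [fiberLift, h]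

theorem fiberLift_single_of_ne (F : ∀ y, E (p y)) {x : X} {y : Y} (n : ℤ) (h : p y ≠ x) :
    fiberLift F x (Finsupp.single y n) = 0 := by
  simp [fiberLift, h]

theorem fiberLift_sliceFun (F : ∀ y, E (p y)) {V : Set Y} (hV : Set.InjOn p V) {y : Y}
    (hy : y ∈ V) : fiberLift F (p y) (sliceFun p V (p y)) = F y := by
  rw [sliceFun_apply_of_mem hV hy, fiberLift_single F 1 rfl, one_smul]

theorem fiberLift_apply (F : ∀ y, E (p y)) (x : X) (v : Y →₀ ℤ) :
    fiberLift F x v = ∑ᶠ y : {y : Y // p y = x}, v y.1 • (y.2 ▸ F y.1 : E x) := by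
  have hfinite (v : Y →₀ ℤ) : Function.HasFiniteSupport fun y : {y : Y // p y = x} =>
      v y.1 • (y.2 ▸ F y.1 : E x) :=
    (v.hasFiniteSupport.preimage Subtype.val_injective.injOn).subset
      fun _ hy => left_ne_zero_of_smul hy
  induction v using Finsupp.induction_linear with
  | zero => simp
  | add u w hu hw =>
    simp only [map_add, hu, hw, Finsupp.add_apply, add_smul,
      finsum_add_distrib (hfinite u) (hfinite w)]
  | single y n =>
    by_cases h : p y = x
    · rw [fiberLift_single F n h, finsum_eq_single _ ⟨y, h⟩, Finsupp.single_eq_same]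
      intro z hz
      rw [Finsupp.single_eq_of_ne fun h' => hz (Subtype.ext h'), zero_smul]
    · rw [fiberLift_single_of_ne F n h, finsum_eq_zero_of_forall_eq_zero]
      rintro ⟨z, hz⟩
      rw [Finsupp.single_eq_of_ne (by rintro rfl; exact h hz), zero_smul]

end FiberwiseFree

variable {X G Y : Type*} [TopologicalSpace X] [TopologicalSpace G] [TopologicalSpace Y]
  {Gr : TopGroupoid X G}

theorem isOpenMap_unit (hs : IsLocalHomeomorph Gr.s) : IsOpenMap Gr.unit := by
  have hsection : IsOpenEmbedding (Gr.s ∘ Gr.unit) := by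
    rw [show Gr.s ∘ Gr.unit = id from funext Gr.s_unit]
    exact IsOpenEmbedding.id
  exact (hs.isOpenEmbedding_of_comp hsection Gr.continuous_unit).isOpenMap

section Convolution

variable {A B : X → Type*} [∀ x, AddCommGroup (A x)] [∀ x, AddCommGroup (B x)]

variable (Gr) in
/-- The action `(f ξ)(x) = ∑_{r(g) = x} f(g) (g · ξ(s(g)))` of a function `f` on the arrows of a
groupoid on the (set-theoretic) sections of a family of abelian groups `A x`, for given
homomorphisms `g · : A (s g) → A (r g)`. -/
noncomputable def convolve (act : ∀ g, A (Gr.s g) →+ A (Gr.r g)) (f : G → ℤ) (ξ : ∀ x, A x)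
    (x : X) : A x :=
  ∑ᶠ g : {g : G // Gr.r g = x}, f g.1 • (g.2 ▸ act g.1 (ξ (Gr.s g.1)) : A x)

theorem convolve_indicator_apply (act : ∀ g, A (Gr.s g) →+ A (Gr.r g)) {S : Set G}
    (hS : Set.InjOn Gr.r S) {g : G} (hg : g ∈ S) (ξ : ∀ x, A x) :
    Gr.convolve act (S.indicator 1) ξ (Gr.r g) = act g (ξ (Gr.s g)) := by
  rw [convolve, finsum_eq_single _ ⟨g, rfl⟩, Set.indicator_of_mem hg, Pi.one_apply, one_smul]
  intro g' hne
  rw [Set.indicator_of_notMem fun h => hne (Subtype.ext (hS h hg g'.2)), zero_smul]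

theorem convolve_congr (act : ∀ g, A (Gr.s g) →+ A (Gr.r g)) {f : G → ℤ} {ξ η : ∀ x, A x}
    (h : ∀ g, f g ≠ 0 → ξ (Gr.s g) = η (Gr.s g)) : Gr.convolve act f ξ = Gr.convolve act f η := by
  refine funext fun x => finsum_congr fun g => ?_
  by_cases hg : f g.1 = 0
  · rw [hg, zero_smul, zero_smul]
  · rw [h _ hg]

theorem map_convolve {actA : ∀ g, A (Gr.s g) →+ A (Gr.r g)}
    {actB : ∀ g, B (Gr.s g) →+ B (Gr.r g)} (φ : ∀ x, A x →+ B x)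
    (hφ : ∀ g v, φ (Gr.r g) (actA g v) = actB g (φ (Gr.s g) v)) {f : G → ℤ} {x : X}
    (hf : Function.HasFiniteSupport fun g : {g : G // Gr.r g = x} => f g.1) (ξ : ∀ x, A x) :
    φ x (Gr.convolve actA f ξ x) = Gr.convolve actB f (fun x => φ x (ξ x)) x := by
  rw [convolve, (φ x).map_finsum (hf.subset fun _ hg => left_ne_zero_of_smul hg), convolve]
  refine finsum_congr ?_
  rintro ⟨g, rfl⟩
  rw [map_zsmul, hφ]

end Convolution

namespace GSpace

variable (Sp : Gr.GSpace Y)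

theorem inv_act_act (g : G) (y : Y) (hy : Gr.s g = Sp.p y) :
    Sp.act (Gr.inv g) (Sp.act g y hy) ((Gr.s_inv g).trans (Sp.p_act g y hy).symm) = y := by
  simp only [Sp.act_act _ _ _ hy (Gr.s_inv g), Gr.inv_mul, hy, Sp.unit_act]

theorem act_inv_act (g : G) (z : Y) (hz : Gr.s (Gr.inv g) = Sp.p z) :
    Sp.act g (Sp.act (Gr.inv g) z hz) ((Gr.r_inv g).symm.trans (Sp.p_act _ z hz).symm) = z := by
  simp only [Sp.act_act _ _ _ hz (Gr.r_inv g).symm, Gr.mul_inv, ← Gr.s_inv, hz, Sp.unit_act]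

/-- The action `ℤ[Y_{s(g)}] → ℤ[Y_{r(g)}]` of an arrow on the stalks of `ℤ[Y]^s`, extended by zero
to `ℤ[Y]`. -/
noncomputable def freeAct (g : G) : (Y →₀ ℤ) →+ (Y →₀ ℤ) :=
  Finsupp.liftAddHom fun y =>
    if h : Gr.s g = Sp.p y then Finsupp.singleAddHom (Sp.act g y h) else 0

theorem freeAct_single (g : G) (y : Y) (n : ℤ) (h : Gr.s g = Sp.p y) :
    Sp.freeAct g (Finsupp.single y n) = Finsupp.single (Sp.act g y h) n := by
  simp [freeAct, h]

theorem freeAct_single_of_ne (g : G) (y : Y) (n : ℤ) (h : Gr.s g ≠ Sp.p y) :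
    Sp.freeAct g (Finsupp.single y n) = 0 := by
  simp [freeAct, h]

theorem freeAct_apply (g : G) (v : Y →₀ ℤ) (z : Y) (hz : Gr.s (Gr.inv g) = Sp.p z) :
    Sp.freeAct g v z = v (Sp.act (Gr.inv g) z hz) := by
  induction v using Finsupp.induction_linear with
  | zero => simp
  | add u w hu hw => simp [hu, hw]
  | single y n =>
    by_cases h : Gr.s g = Sp.p y
    · rw [Sp.freeAct_single g y n h, Finsupp.single_apply, Finsupp.single_apply]
      refine if_congr ⟨?_, ?_⟩ rfl rfl
      · rintro rfl
        exact (Sp.inv_act_act g y h).symm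
      · rintro rfl
        exact Sp.act_inv_act g z hz
    · rw [Sp.freeAct_single_of_ne g y n h, Finsupp.single_eq_of_ne', Finsupp.zero_apply]
      rintro rfl
      exact h ((Gr.r_inv g).symm.trans (Sp.p_act _ z hz).symm)

theorem freeAct_apply_of_ne (g : G) (v : Y →₀ ℤ) (z : Y) (hz : Sp.p z ≠ Gr.r g) :
    Sp.freeAct g v z = 0 := by
  induction v using Finsupp.induction_linear with
  | zero => simp
  | add u w hu hw => simp [hu, hw]
  | single y n =>
    by_cases h : Gr.s g = Sp.p y
    · rw [Sp.freeAct_single g y n h, Finsupp.single_eq_of_ne']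
      rintro rfl
      exact hz (Sp.p_act g y h)
    · rw [Sp.freeAct_single_of_ne g y n h, Finsupp.zero_apply]

end GSpace

section FreeSections

variable {Sp : Gr.GSpace Y}

theorem freeSection_zero : FreeSection Sp 0 :=
  ⟨by simp, fun x => ⟨Set.univ, isOpen_univ, trivial, 0, Fin.elim0, Fin.elim0, Fin.elim0,
    fun i => i.elim0, fun i => i.elim0, by simp⟩, ∅, isCompact_empty, by simp⟩

theorem FreeSection.add {ξ η : X → (Y →₀ ℤ)} (hξ : FreeSection Sp ξ) (hη : FreeSection Sp η) :
    FreeSection Sp (ξ + η) := by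
  obtain ⟨hξ_fiber, hξ_local, K, hK, hξK⟩ := hξ
  obtain ⟨hη_fiber, hη_local, L, hL, hηL⟩ := hη
  refine ⟨fun x y hy => ?_, fun x => ?_, K ∪ L, hK.union hL, fun x hx => ?_⟩
  · exact (Finset.mem_union.1 (Finsupp.support_add hy)).elim (hξ_fiber x y) (hη_fiber x y)
  · obtain ⟨U, hU, hxU, k, V, a, σ, hV, hσ, hsum⟩ := hξ_local x
    obtain ⟨U', hU', hxU', k', V', a', σ', hV', hσ', hsum'⟩ := hη_local x
    refine ⟨U ∩ U', hU.inter hU', ⟨hxU, hxU'⟩, k + k', Fin.append V V', Fin.append a a',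
      Fin.append σ σ', fun i => ?_, fun i x' hx' => ?_, fun x' hx' => ?_⟩
    · refine Fin.addCases (fun i => ?_) (fun i => ?_) i
      · simpa using ⟨(hV i).1, (hV i).2.1, (hV i).2.2.1,
          Set.inter_subset_left.trans (hV i).2.2.2⟩
      · simpa using ⟨(hV' i).1, (hV' i).2.1, (hV' i).2.2.1,
          Set.inter_subset_right.trans (hV' i).2.2.2⟩
    · refine Fin.addCases (fun i => ?_) (fun i => ?_) i
      · simpa using hσ i x' hx'.1
      · simpa using hσ' i x' hx'.2
    · simp only [Pi.add_apply, hsum x' hx'.1, hsum' x' hx'.2, Fin.sum_univ_add,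
        Fin.append_left, Fin.append_right]
  · simp [hξK x fun h => hx (.inl h), hηL x fun h => hx (.inr h)]

theorem FreeSection.neg {ξ : X → (Y →₀ ℤ)} (hξ : FreeSection Sp ξ) : FreeSection Sp (-ξ) := by
  obtain ⟨hfiber, hlocal, K, hK, hξK⟩ := hξ
  refine ⟨fun x y hy => hfiber x y (by simpa using hy), fun x => ?_, K, hK,
    fun x hx => by simp [hξK x hx]⟩
  obtain ⟨U, hU, hxU, k, V, a, σ, hV, hσ, hsum⟩ := hlocal x
  refine ⟨U, hU, hxU, k, V, -a, σ, hV, hσ, fun x' hx' => ?_⟩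
  simp only [Pi.neg_apply, hsum x' hx', neg_smul, Finset.sum_neg_distrib]

theorem freeSection_sliceFun [T2Space X] (hSp : Sp.IsEtaleSpace) (V : CompactOpens Y)
    (hV : Set.InjOn Sp.p V) : FreeSection Sp (sliceFun Sp.p V) := by
  have hK : IsCompact (Sp.p '' V) := V.isCompact.image Sp.continuous_p
  refine ⟨fun x y hy => ?_, fun x => ?_, _, hK, fun x hx => sliceFun_apply_of_notMem hx⟩
  · rw [Finsupp.mem_support_iff, sliceFun_apply_apply hV, ite_ne_right_iff] at hy
    exact hy.1.2
  · by_cases hx : x ∈ Sp.p '' V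
    · have : Nonempty Y := ⟨hx.choose⟩
      refine ⟨Sp.p '' V, hSp.isOpenMap _ V.isOpen, hx, 1, fun _ => V, fun _ => 1,
        fun _ => Function.invFunOn Sp.p V, fun _ => ⟨V.isCompact, V.isOpen, hV, subset_rfl⟩,
        fun _ x' hx' => ⟨Function.invFunOn_mem hx', Function.invFunOn_eq hx'⟩, ?_⟩
      rintro _ ⟨y, hy, rfl⟩
      simp [sliceFun_apply_of_mem hV hy, hV.leftInvOn_invFunOn hy]
    · exact ⟨(Sp.p '' V)ᶜ, hK.isClosed.isOpen_compl, hx, 0, Fin.elim0, Fin.elim0, Fin.elim0,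
        fun i => i.elim0, fun i => i.elim0, fun x' hx' => by
          simp [sliceFun_apply_of_notMem hx']⟩

variable (Sp)

/-- The group `Γ_c(ℤ[Y]^s)` of compactly supported continuous sections. -/
def GSpace.freeSections : AddSubgroup (X → (Y →₀ ℤ)) where
  carrier := {ξ | FreeSection Sp ξ}
  zero_mem' := freeSection_zero
  add_mem' := FreeSection.add
  neg_mem' := FreeSection.neg

/-- The value `ξ ↦ ξ(x)` of a section in the stalk over `x`, as a homomorphism. -/
noncomputable def GSpace.evalFreeSection (x : X) : Sp.freeSections →+ (Y →₀ ℤ) :=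
  (Pi.evalAddMonoidHom _ x).comp Sp.freeSections.subtype

variable {Sp}

/-- The basic section `⟨·⟩_V` of a compact open slice `V`, as an element of `Γ_c(ℤ[Y]^s)`. -/
noncomputable def sliceSection [T2Space X] (hSp : Sp.IsEtaleSpace) (V : CompactOpens Y)
    (hV : Set.InjOn Sp.p V) : Sp.freeSections :=
  ⟨sliceFun Sp.p V, freeSection_sliceFun hSp V hV⟩

/-- The basic sections `⟨·⟩_V` of those compact open slices `V` that meet the fiber over `x`. -/
def sliceSectionsAt [T2Space X] (hSp : Sp.IsEtaleSpace) (x : X) : Set Sp.freeSections :=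
  {ξ | ∃ (V : CompactOpens Y) (hV : Set.InjOn Sp.p V), x ∈ Sp.p '' V ∧
    ξ = sliceSection hSp V hV}

theorem exists_mem_closure_sliceSectionsAt_eventuallyEq [T2Space X] (hSp : Sp.IsEtaleSpace)
    (ξ : Sp.freeSections) (x : X) :
    ∃ η ∈ AddSubgroup.closure (sliceSectionsAt hSp x), ξ.1 =ᶠ[𝓝 x] η.1 := by
  obtain ⟨U, hU, hxU, k, V, a, σ, hV, hσ, hsum⟩ := ξ.2.2.1 x
  let W (i : Fin k) : CompactOpens Y := ⟨⟨V i, (hV i).1⟩, (hV i).2.1⟩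
  let ζ (i : Fin k) : Sp.freeSections := sliceSection hSp (W i) (hV i).2.2.1
  have hζ_mem (i : Fin k) : ζ i ∈ sliceSectionsAt hSp x :=
    ⟨W i, (hV i).2.2.1, (hV i).2.2.2 hxU, rfl⟩
  refine ⟨∑ i, a i • ζ i,
    sum_mem fun i _ => zsmul_mem (AddSubgroup.subset_closure (hζ_mem i)) _, ?_⟩
  filter_upwards [hU.mem_nhds hxU] with x' hx'
  have hζ (i : Fin k) : (ζ i).1 x' = Finsupp.single (σ i x') 1 := by
    have hval := sliceFun_apply_of_mem (hV i).2.2.1 (hσ i x' hx').1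
    rwa [(hσ i x' hx').2] at hval
  simp only [hsum x' hx', ← hζ, AddSubgroup.val_finsetSum, Finset.sum_apply,
    AddSubgroup.coe_zsmul, Pi.smul_apply]

theorem sliceSection_eventuallyEq [T2Space X] (hSp : Sp.IsEtaleSpace) {V W : CompactOpens Y}
    (hV : Set.InjOn Sp.p V) (hW : Set.InjOn Sp.p W) {y : Y} (hyV : y ∈ V) (hyW : y ∈ W) :
    (sliceSection hSp V hV).1 =ᶠ[𝓝 (Sp.p y)] (sliceSection hSp W hW).1 := by
  rw [← hSp.map_nhds_eq y]
  refine eventually_map.2 ?_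
  filter_upwards [V.isOpen.mem_nhds hyV, W.isOpen.mem_nhds hyW] with z hzV hzW
  exact (sliceFun_apply_of_mem hV hzV).trans (sliceFun_apply_of_mem hW hzW).symm

theorem FreeSectionSmulSpec.val_eq_convolve [T1Space X]
    {smulF : C_c(G, ℤ) → Sp.freeSections → Sp.freeSections}
    (hsmulF : FreeSectionSmulSpec Sp smulF) (hr : IsLocalHomeomorph Gr.r) (f : C_c(G, ℤ))
    (ξ : Sp.freeSections) :
    (smulF f ξ).1 = Gr.convolve (A := fun _ => Y →₀ ℤ) Sp.freeAct f ξ.1 := by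
  ext x y
  have hfinite : Function.HasFiniteSupport fun g : {g : G // Gr.r g = x} =>
      f g.1 • Sp.freeAct g.1 (ξ.1 (Gr.s g.1)) :=
    (hasFiniteSupport_comp_fiber_val hr f x).subset fun _ hg => left_ne_zero_of_smul hg
  have hcoord : Gr.convolve (A := fun _ => Y →₀ ℤ) Sp.freeAct f ξ.1 x y =
      ∑ᶠ g : {g : G // Gr.r g = x}, f g.1 * Sp.freeAct g.1 (ξ.1 (Gr.s g.1)) y := by
    simp only [convolve, eq_rec_constant]
    exact (Finsupp.applyAddHom y).map_finsum hfinite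
  rw [hcoord]
  by_cases hy : Sp.p y = x
  · rw [(hsmulF f ξ x).1 y hy]
    exact finsum_congr fun g => by
      rw [Sp.freeAct_apply _ _ y ((Gr.s_inv g.1).trans (g.2.trans hy.symm))]
  · rw [(hsmulF f ξ x).2 y hy, finsum_eq_zero_of_forall_eq_zero]
    rintro ⟨g, rfl⟩
    rw [Sp.freeAct_apply_of_ne g _ y hy, mul_zero]

end FreeSections

variable {E : X → Type*} [∀ x, AddCommGroup (E x)] [TopologicalSpace ((x : X) × E x)]
  {Sp : Gr.GSpace Y} {Sh : Gr.GSheaf E}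

section SheafHom

/-- The condition that `F` is a morphism of `G`-sheaves `ℤ[Y]^s → 𝓜`, which is encoded by its
values `F y` on the generators `[y]`. -/
def IsSheafHom (Sp : Gr.GSpace Y) (Sh : Gr.GSheaf E) (F : (y : Y) → E (Sp.p y)) : Prop :=
  Continuous (fun y => (⟨Sp.p y, F y⟩ : (x : X) × E x)) ∧
    ∀ (g : G) (y : Y) (hc : Gr.s g = Sp.p y),
      (Sp.p_act g y hc) ▸ F (Sp.act g y hc) = Sh.act g (hc.symm ▸ F y)

/-- The group of continuous global sections of a `G`-sheaf. -/
def GSheaf.continuousSections (Sh : Gr.GSheaf E) : AddSubgroup (∀ x, E x) where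
  carrier := {ξ | Continuous fun x => (⟨x, ξ x⟩ : (x : X) × E x)}
  zero_mem' := Sh.continuous_zero
  add_mem' := Sh.continuous_add _ _
  neg_mem' := Sh.continuous_neg _

theorem fiberLift_freeAct {F : (y : Y) → E (Sp.p y)}
    (hF : ∀ (g : G) (y : Y) (hc : Gr.s g = Sp.p y),
      (Sp.p_act g y hc) ▸ F (Sp.act g y hc) = Sh.act g (hc.symm ▸ F y))
    (g : G) (v : Y →₀ ℤ) :
    fiberLift F (Gr.r g) (Sp.freeAct g v) = Sh.act g (fiberLift F (Gr.s g) v) := by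
  induction v using Finsupp.induction_linear with
  | zero => simp only [map_zero]
  | add u w hu hw => simp only [map_add, hu, hw]
  | single y n =>
    by_cases h : Gr.s g = Sp.p y
    · rw [Sp.freeAct_single g y n h, fiberLift_single F n (Sp.p_act g y h),
        fiberLift_single F n h.symm, map_zsmul, hF g y h]
    · simp only [Sp.freeAct_single_of_ne g y n h, fiberLift_single_of_ne F n (Ne.symm h), map_zero]

theorem continuous_fiberLift_sliceFun [T2Space X] (Sh : Gr.GSheaf E) (hSp : Sp.IsEtaleSpace)
    {F : (y : Y) → E (Sp.p y)} (hF : Continuous fun y => (⟨Sp.p y, F y⟩ : (x : X) × E x))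
    (V : CompactOpens Y) (hV : Set.InjOn Sp.p V) :
    Continuous fun x => (⟨x, fiberLift F x (sliceFun Sp.p V x)⟩ : (x : X) × E x) := by
  refine continuous_iff_continuousAt.2 fun x => ?_
  by_cases hx : x ∈ Sp.p '' V
  · obtain ⟨y, hy, rfl⟩ := hx
    rw [ContinuousAt, ← hSp.map_nhds_eq y, tendsto_map'_iff, fiberLift_sliceFun F hV hy]
    refine hF.continuousAt.tendsto.congr' ?_
    filter_upwards [V.isOpen.mem_nhds hy] with z hz
    simp only [Function.comp_apply, fiberLift_sliceFun F hV hz]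
  · have hclosed : IsClosed (Sp.p '' V) := (V.isCompact.image Sp.continuous_p).isClosed
    refine Sh.continuous_zero.continuousAt.congr ?_
    filter_upwards [hclosed.isOpen_compl.mem_nhds hx] with z hz
    rw [sliceFun_apply_of_notMem hz, map_zero]

theorem continuous_fiberLift [T2Space X] (Sh : Gr.GSheaf E) (hSp : Sp.IsEtaleSpace)
    {F : (y : Y) → E (Sp.p y)} (hF : Continuous fun y => (⟨Sp.p y, F y⟩ : (x : X) × E x))
    (ξ : Sp.freeSections) :
    Continuous fun x => (⟨x, fiberLift F x (ξ.1 x)⟩ : (x : X) × E x) := by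
  let lift : Sp.freeSections →+ ∀ x, E x :=
    AddMonoidHom.pi fun x => (fiberLift F x).comp (Sp.evalFreeSection x)
  refine continuous_iff_continuousAt.2 fun x => ?_
  obtain ⟨η, hη, hξη⟩ := exists_mem_closure_sliceSectionsAt_eventuallyEq hSp ξ x
  have hclosure : AddSubgroup.closure (sliceSectionsAt hSp x) ≤ Sh.continuousSections.comap lift :=
    (AddSubgroup.closure_le _).2 <| by
      rintro _ ⟨V, hV, -, rfl⟩
      exact continuous_fiberLift_sliceFun Sh hSp hF V hV
  have hcont : Continuous fun x => (⟨x, fiberLift F x (η.1 x)⟩ : (x : X) × E x) := hclosure hη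
  refine hcont.continuousAt.congr ?_
  filter_upwards [hξη] with x' hx'
  rw [hx']

/-- The map `ξ ↦ (x ↦ F(ξ(x)))` on compactly supported sections. -/
noncomputable def liftSection [T2Space X] (Sh : Gr.GSheaf E) (hSp : Sp.IsEtaleSpace)
    {F : (y : Y) → E (Sp.p y)} (hF : Continuous fun y => (⟨Sp.p y, F y⟩ : (x : X) × E x))
    (ξ : Sp.freeSections) : Sh.GammaC :=
  ⟨fun x => fiberLift F x (ξ.1 x), continuous_fiberLift Sh hSp hF ξ, by
    obtain ⟨K, hK, hξK⟩ := ξ.2.2.2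
    exact ⟨K, hK, fun x hx => by simp only [hξK x hx, map_zero]⟩⟩

end SheafHom

section ModuleHom

variable {smulF : C_c(G, ℤ) → Sp.freeSections → Sp.freeSections}
  {smulM : C_c(G, ℤ) → Sh.GammaC → Sh.GammaC} {T : Sp.freeSections → Sh.GammaC}

/-- The condition that `T` is a morphism of `ℤ[G]`-modules `Γ_c(ℤ[Y]^s) → Γ_c(𝓜)`. -/
def IsModuleHom (smulF : C_c(G, ℤ) → Sp.freeSections → Sp.freeSections)
    (smulM : C_c(G, ℤ) → Sh.GammaC → Sh.GammaC) (T : Sp.freeSections → Sh.GammaC) : Prop :=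
  (∀ ξ η ζ : Sp.freeSections, (∀ x, ζ.1 x = ξ.1 x + η.1 x) →
    ∀ x, (T ζ).1 x = (T ξ).1 x + (T η).1 x) ∧
  (∀ f ξ, T (smulF f ξ) = smulM f (T ξ))

theorem GammaSmulSpec.val_eq_convolve (hsmulM : GammaSmulSpec Sh smulM) (f : C_c(G, ℤ))
    (η : Sh.GammaC) : (smulM f η).1 = Gr.convolve Sh.act f η.1 :=
  funext (hsmulM f η)

theorem GSheaf.convolve_indicator_unit (Sh : Gr.GSheaf E) {U : Set X} {x : X} (hx : x ∈ U)
    (η : ∀ x, E x) : Gr.convolve Sh.act ((Gr.unit '' U).indicator 1) η x = η x := by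
  have hinj : Set.InjOn Gr.r (Gr.unit '' U) := by
    rintro _ ⟨a, -, rfl⟩ _ ⟨b, -, rfl⟩ hab
    rw [← Gr.r_unit a, hab, Gr.r_unit]
  have hcast {a b : X} (h : a = b) : h ▸ η a = η b := by
    subst h
    rfl
  have hunit := convolve_indicator_apply Sh.act hinj (Set.mem_image_of_mem Gr.unit hx) η
  rwa [Sh.act_unit, hcast, Gr.r_unit] at hunit

theorem isModuleHom_liftSection [T2Space X] (hr : IsLocalHomeomorph Gr.r)
    (hSp : Sp.IsEtaleSpace) (hsmulF : FreeSectionSmulSpec Sp smulF)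
    (hsmulM : GammaSmulSpec Sh smulM) {F : (y : Y) → E (Sp.p y)} (hF : IsSheafHom Sp Sh F) :
    IsModuleHom smulF smulM (liftSection Sh hSp hF.1) := by
  refine ⟨fun ξ η ζ h x => ?_, fun f ξ => Subtype.ext (funext fun x => ?_)⟩
  · exact (congrArg (fiberLift F x) (h x)).trans (map_add _ _ _)
  · calc fiberLift F x ((smulF f ξ).1 x)
      _ = fiberLift F x (Gr.convolve (A := fun _ => Y →₀ ℤ) Sp.freeAct f ξ.1 x) := by
        rw [hsmulF.val_eq_convolve hr]
      _ = Gr.convolve Sh.act f (liftSection Sh hSp hF.1 ξ).1 x :=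
        map_convolve (fiberLift F) (fiberLift_freeAct hF.2)
          (hasFiniteSupport_comp_fiber_val hr f x) ξ.1
      _ = (smulM f (liftSection Sh hSp hF.1 ξ)).1 x := by
        rw [hsmulM.val_eq_convolve]

/-- The value `T(⟨y⟩_V)(p(y))` of `Ξ(T)` on the generator `[y]`, for an arbitrarily chosen compact
open slice `V` around `y`. -/
noncomputable def generatorValue [T2Space X] [LocallyCompactSpace X] [TotallyDisconnectedSpace X]
    (hSp : Sp.IsEtaleSpace) (T : Sp.freeSections → Sh.GammaC) (y : Y) : E (Sp.p y) :=
  (T (sliceSection hSp _ (exists_compactOpens_injOn hSp y).choose_spec.2)).1 (Sp.p y)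

namespace IsModuleHom

/-- The homomorphism `ξ ↦ (T ξ)(x)`. -/
noncomputable def evalHom (hT : IsModuleHom smulF smulM T) (x : X) : Sp.freeSections →+ E x :=
  AddMonoidHom.mk' (fun ξ => (T ξ).1 x) fun ξ η => hT.1 ξ η (ξ + η) (fun _ => rfl) x

variable [T2Space X] [LocallyCompactSpace X] [TotallyDisconnectedSpace X] [T2Space G]

-- Multiplying by `χ_U`, for a small neighborhood `U` of `x`, cuts out the germ at `x`.
theorem apply_eq_of_eventuallyEq (hT : IsModuleHom smulF smulM T) (hGr : Gr.IsEtale)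
    (hsmulF : FreeSectionSmulSpec Sp smulF) (hsmulM : GammaSmulSpec Sh smulM)
    {ξ η : Sp.freeSections} {x : X} (h : ξ.1 =ᶠ[𝓝 x] η.1) : (T ξ).1 x = (T η).1 x := by
  obtain ⟨U, hxU, hU⟩ := exists_compactOpens_subset h
  let χ := compactOpenIndicator (U.map Gr.unit Gr.continuous_unit (isOpenMap_unit hGr.1))
  have hχ : smulF χ ξ = smulF χ η := by
    refine Subtype.ext ?_
    rw [hsmulF.val_eq_convolve hGr.2, hsmulF.val_eq_convolve hGr.2]
    refine convolve_congr _ fun g hg => ?_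
    obtain ⟨u, hu, rfl⟩ := Set.mem_of_indicator_ne_zero hg
    rw [Gr.s_unit]
    exact hU hu
  have hχT (ζ : Sp.freeSections) : (T (smulF χ ζ)).1 x = (T ζ).1 x := by
    rw [hT.2, hsmulM.val_eq_convolve]
    exact Sh.convolve_indicator_unit hxU _
  rw [← hχT ξ, hχ, hχT η]

theorem apply_eq_fiberLift (hT : IsModuleHom smulF smulM T) (hGr : Gr.IsEtale)
    (hSp : Sp.IsEtaleSpace) (hsmulF : FreeSectionSmulSpec Sp smulF)
    (hsmulM : GammaSmulSpec Sh smulM) {F : (y : Y) → E (Sp.p y)}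
    (hF : ∀ (V : CompactOpens Y) (hV : Set.InjOn Sp.p V), ∀ y ∈ V,
      (T (sliceSection hSp V hV)).1 (Sp.p y) = F y)
    (ξ : Sp.freeSections) (x : X) : (T ξ).1 x = fiberLift F x (ξ.1 x) := by
  have hslice : Set.EqOn (hT.evalHom x) ((fiberLift F x).comp (Sp.evalFreeSection x))
      (sliceSectionsAt hSp x) := by
    rintro _ ⟨V, hV, ⟨y, hy, rfl⟩, rfl⟩
    exact (hF V hV y hy).trans (fiberLift_sliceFun F hV hy).symm
  obtain ⟨η, hη, hξη⟩ := exists_mem_closure_sliceSectionsAt_eventuallyEq hSp ξ x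
  calc (T ξ).1 x
    _ = (T η).1 x := hT.apply_eq_of_eventuallyEq hGr hsmulF hsmulM hξη
    _ = fiberLift F x (η.1 x) := AddMonoidHom.eqOn_closure hslice hη
    _ = fiberLift F x (ξ.1 x) := by rw [hξη.self_of_nhds]

theorem isSheafHom (hT : IsModuleHom smulF smulM T) (hGr : Gr.IsEtale)
    (hSp : Sp.IsEtaleSpace) (hsmulF : FreeSectionSmulSpec Sp smulF)
    (hsmulM : GammaSmulSpec Sh smulM) {F : (y : Y) → E (Sp.p y)}
    (hF : ∀ (V : CompactOpens Y) (hV : Set.InjOn Sp.p V), ∀ y ∈ V,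
      (T (sliceSection hSp V hV)).1 (Sp.p y) = F y) : IsSheafHom Sp Sh F := by
  constructor
  · refine continuous_iff_continuousAt.2 fun y => ?_
    obtain ⟨V, hy, hV⟩ := exists_compactOpens_injOn hSp y
    have hcont := (T (sliceSection hSp V hV)).2.1.comp Sp.continuous_p
    refine hcont.continuousAt.congr ?_
    filter_upwards [V.isOpen.mem_nhds hy] with z hz
    simp only [Function.comp_apply, hF V hV z hz]
  · intro g y hc
    obtain ⟨V, hy, hV⟩ := exists_compactOpens_injOn hSp y
    obtain ⟨B, hg, hB⟩ := exists_compactOpens_injOn hGr.2 g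
    let χ := compactOpenIndicator B
    let ζ := sliceSection hSp V hV
    have hζ : ζ.1 (Gr.s g) = Finsupp.single y 1 := hc ▸ sliceFun_apply_of_mem hV hy
    have hT_apply := hT.apply_eq_fiberLift hGr hSp hsmulF hsmulM hF
    calc (Sp.p_act g y hc) ▸ F (Sp.act g y hc)
      _ = fiberLift F (Gr.r g) (Sp.freeAct g (ζ.1 (Gr.s g))) := by
        rw [hζ, Sp.freeAct_single g y 1 hc, fiberLift_single F 1 (Sp.p_act g y hc), one_smul]
      _ = fiberLift F (Gr.r g) ((smulF χ ζ).1 (Gr.r g)) := by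
        rw [hsmulF.val_eq_convolve hGr.2]
        exact congrArg _
          (convolve_indicator_apply (Gr := Gr) (A := fun _ => Y →₀ ℤ) Sp.freeAct hB hg ζ.1).symm
      _ = (smulM χ (T ζ)).1 (Gr.r g) := by rw [← hT_apply, hT.2]
      _ = Sh.act g ((T ζ).1 (Gr.s g)) := by
        rw [hsmulM.val_eq_convolve]
        exact convolve_indicator_apply Sh.act hB hg _
      _ = Sh.act g (hc.symm ▸ F y) := by
        rw [hT_apply, hζ, fiberLift_single F 1 hc.symm, one_smul]

theorem apply_sliceSection (hT : IsModuleHom smulF smulM T) (hGr : Gr.IsEtale)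
    (hSp : Sp.IsEtaleSpace) (hsmulF : FreeSectionSmulSpec Sp smulF)
    (hsmulM : GammaSmulSpec Sh smulM) (V : CompactOpens Y) (hV : Set.InjOn Sp.p V) (y : Y)
    (hy : y ∈ V) : (T (sliceSection hSp V hV)).1 (Sp.p y) = generatorValue hSp T y :=
  hT.apply_eq_of_eventuallyEq hGr hsmulF hsmulM <| sliceSection_eventuallyEq hSp hV _ hy
    (exists_compactOpens_injOn hSp y).choose_spec.1

end IsModuleHom

/-- The isomorphism `Ξ : Hom_G(Γ_c(ℤ[Y]^s), Γ_c(𝓜)) ≃ Hom_G(ℤ[Y]^s, 𝓜)`. -/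
noncomputable def moduleHomEquivSheafHom [T2Space X] [LocallyCompactSpace X]
    [TotallyDisconnectedSpace X] [T2Space G] (hGr : Gr.IsEtale) (hSp : Sp.IsEtaleSpace)
    (hsmulF : FreeSectionSmulSpec Sp smulF) (hsmulM : GammaSmulSpec Sh smulM) :
    {T : Sp.freeSections → Sh.GammaC // IsModuleHom smulF smulM T} ≃
      {F : (y : Y) → E (Sp.p y) // IsSheafHom Sp Sh F} where
  toFun T := ⟨generatorValue hSp T.1, T.2.isSheafHom hGr hSp hsmulF hsmulM
    (T.2.apply_sliceSection hGr hSp hsmulF hsmulM)⟩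
  invFun F := ⟨liftSection Sh hSp F.2.1, isModuleHom_liftSection hGr.2 hSp hsmulF hsmulM F.2⟩
  left_inv T := by
    refine Subtype.ext (funext fun ξ => Subtype.ext (funext fun x => ?_))
    exact (T.2.apply_eq_fiberLift hGr hSp hsmulF hsmulM
      (T.2.apply_sliceSection hGr hSp hsmulF hsmulM) ξ x).symm
  right_inv F := Subtype.ext (funext fun y =>
    fiberLift_sliceFun F.1 (exists_compactOpens_injOn hSp y).choose_spec.2
      (exists_compactOpens_injOn hSp y).choose_spec.1)

end ModuleHom

end TopGroupoid

theorem statement8_general {X G Y : Type*} [TopologicalSpace X] [TopologicalSpace G]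
    [TopologicalSpace Y] [T2Space X] [LocallyCompactSpace X] [T2Space G]
    {E : X → Type*} [∀ x, AddCommGroup (E x)] [TopologicalSpace ((x : X) × E x)]
    (Gr : TopGroupoid X G) (hGr : Gr.IsAmple) (Sp : Gr.GSpace Y) (hSp : Sp.IsEtaleSpace)
    (Sh : Gr.GSheaf E) (smulF : C_c(G, ℤ) → Sp.freeSections → Sp.freeSections)
    (hsmulF : FreeSectionSmulSpec Sp smulF)
    (smulM : C_c(G, ℤ) → Sh.GammaC → Sh.GammaC) (hsmulM : GammaSmulSpec Sh smulM) :
    ∃ Ξ : {T : Sp.freeSections → Sh.GammaC // IsModuleHom smulF smulM T} →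
        {F : (y : Y) → E (Sp.p y) // IsSheafHom Sp Sh F},
      (∀ φ (y : Y) (V : Set Y), y ∈ V → IsCompact V → IsOpen V → Set.InjOn Sp.p V →
        ∀ ξV : Sp.freeSections,
          (∀ (x : X) (y' : Y), ξV.1 x y' = if y' ∈ V ∧ Sp.p y' = x then 1 else 0) →
          (Ξ φ).1 y = (φ.1 ξV).1 (Sp.p y)) ∧
      Function.Bijective Ξ ∧
      (∀ φ₁ φ₂ φ₃, (∀ ξ x, (φ₃.1 ξ).1 x = (φ₁.1 ξ).1 x + (φ₂.1 ξ).1 x) →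
        ∀ y : Y, (Ξ φ₃).1 y = (Ξ φ₁).1 y + (Ξ φ₂).1 y) ∧
      (∀ φ Fm, Ξ φ = Fm ↔ ∀ (ξ : Sp.freeSections) (x : X),
        (φ.1 ξ).1 x = ∑ᶠ y : {y : Y // Sp.p y = x}, ξ.1 x y.1 • (y.2 ▸ Fm.1 y.1)) := by
  have : TotallyDisconnectedSpace X := hGr.2
  let Ξ := moduleHomEquivSheafHom hGr.1 hSp hsmulF hsmulM
  refine ⟨Ξ, fun φ y V hy hVc hVo hV ξV hξV => ?_, Ξ.bijective, fun φ₁ φ₂ φ₃ h y => h _ _,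
    fun φ Fm => ?_⟩
  · have hslice : ξV = sliceSection hSp ⟨⟨V, hVc⟩, hVo⟩ hV := by
      refine Subtype.ext (funext fun x => Finsupp.ext fun y' => ?_)
      exact (hξV x y').trans (sliceFun_apply_apply hV x y').symm
    rw [hslice, φ.2.apply_sliceSection hGr.1 hSp hsmulF hsmulM _ hV y hy]
    rfl
  · simp only [← fiberLift_apply]
    rw [← Ξ.eq_symm_apply, Subtype.ext_iff, funext_iff]
    exact forall_congr' fun ξ => Subtype.ext_iff.trans funext_iff

/-- (Proposition `lem:hom_isom`.)  Let `G` be an ample groupoid, `M` a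
nondegenerate `ℤ[G]`-module identified (via Steinberg's equivalence) with the compactly
supported sections `Γ_c(𝓜)` of its associated `G`-sheaf `𝓜`, and `Y` an étale `G`-space.  The
map `Ξ : Hom_G(Γ_c(ℤ[Y]^s), Γ_c(𝓜)) → Hom_G(ℤ[Y]^s, 𝓜)`,
`Ξ(φ)([y]) = φ(⟨y⟩_V^s)(p(y))` (for any compact open slice `V ∋ y`), is a well-defined
isomorphism, independent of the choice of `V`, with inverse `Ξ⁻¹(f)(ξ)(x) = f(ξ(x))`. -/
theorem statement8 {X G Y : Type*} [TopologicalSpace X] [TopologicalSpace G]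
    [TopologicalSpace Y] [T2Space X] [LocallyCompactSpace X]
    [T2Space G] [LocallyCompactSpace G] [T2Space Y] [LocallyCompactSpace Y]
    {E : X → Type*} [∀ x, AddCommGroup (E x)] [TopologicalSpace ((x : X) × E x)]
    (Gr : TopGroupoid X G) (hGr : Gr.IsAmple)
    (Sp : Gr.GSpace Y) (hSp : Sp.IsEtaleSpace)
    (Sh : Gr.GSheaf E)
    -- the `ℤ[G]`-module structure on `Γ_c(ℤ[Y]^s)`
    (smulF : C_c(G, ℤ) → {ξ : X → (Y →₀ ℤ) // FreeSection Sp ξ} →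
      {ξ : X → (Y →₀ ℤ) // FreeSection Sp ξ})
    (hsmulF : FreeSectionSmulSpec Sp smulF)
    -- the `ℤ[G]`-module structure on `M = Γ_c(𝓜)`
    (smulM : C_c(G, ℤ) → Sh.GammaC → Sh.GammaC) (hsmulM : GammaSmulSpec Sh smulM) :
    ∃ Ξ : {T : {ξ : X → (Y →₀ ℤ) // FreeSection Sp ξ} → Sh.GammaC //
            (∀ ξ η ζ, (∀ x, ζ.1 x = ξ.1 x + η.1 x) →
              ∀ x, (T ζ).1 x = (T ξ).1 x + (T η).1 x) ∧
            (∀ f ξ, T (smulF f ξ) = smulM f (T ξ))} →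
          {F : (y : Y) → E (Sp.p y) //
            Continuous (fun y => (⟨Sp.p y, F y⟩ : (x : X) × E x)) ∧
            ∀ (g : G) (y : Y) (hc : Gr.s g = Sp.p y),
              (Sp.p_act g y hc) ▸ F (Sp.act g y hc) = Sh.act g (hc.symm ▸ F y)},
      -- the defining formula `Ξ(φ)([y]) = φ(⟨y⟩_V^s)(p(y))`, for every choice of slice `V`
      (∀ φ (y : Y) (V : Set Y), y ∈ V → IsCompact V → IsOpen V → Set.InjOn Sp.p V →
        ∀ ξV : {ξ : X → (Y →₀ ℤ) // FreeSection Sp ξ},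
          (∀ (x : X) (y' : Y), ξV.1 x y' = if y' ∈ V ∧ Sp.p y' = x then 1 else 0) →
          (Ξ φ).1 y = (φ.1 ξV).1 (Sp.p y)) ∧
      Function.Bijective Ξ ∧
      -- `Ξ` is additive
      (∀ φ₁ φ₂ φ₃, (∀ ξ x, (φ₃.1 ξ).1 x = (φ₁.1 ξ).1 x + (φ₂.1 ξ).1 x) →
        ∀ y : Y, (Ξ φ₃).1 y = (Ξ φ₁).1 y + (Ξ φ₂).1 y) ∧
      -- the inverse is `Ξ⁻¹(f)(ξ)(x) = f(ξ(x))`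
      (∀ φ Fm, Ξ φ = Fm ↔
        ∀ (ξ : {ξ : X → (Y →₀ ℤ) // FreeSection Sp ξ}) (x : X),
          (φ.1 ξ).1 x = ∑ᶠ y : {y : Y // Sp.p y = x}, ξ.1 x y.1 • (y.2 ▸ Fm.1 y.1)) :=
  statement8_general Gr hGr Sp hSp Sh smulF hsmulF smulM hsmulM
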